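/- arXiv:2405.09172 — 6 statements merged into one kernel-verified Lean document; each statement's English description precedes it below -/
import Mathlib

section
/- Let n ≥ 1, let H be a cyclic group of order n written additively with generator h, and let Λ be an abelian group (written multiplicatively) equipped with an action of H by group automorphisms. For a 2-cocycle φ: H × H → Λ set Ω(φ) := ∏_{ν=0}^{n−1} φ(νh, h). Then Ω(φ) lies in the invariant subgroup Λ^H, Ω maps 2-coboundaries into the norm subgroup N_H(Λ), and Ω induces a group isomorphism H²(H, Λ) ≅ Λ^H / N_H(Λ). An inverse is induced by the map Ψ that sends x ∈ Λ^H to the 2-cocycle Ψ(x)(ih, jh) = x^{⌊(i+j)/n⌋ − ⌊i/n⌋ − ⌊j/n⌋} for i, j ∈ {0, …, n−1}. -/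
/-!
For a cocycle `φ` put `P(k) = ∏_{ν<k} φ(ν, 1)` for natural numbers `k`. The cocycle identity with
third argument `1` gives, by induction on `m`,
`φ(k, m) = P(k+m) · P(k)⁻¹ · (k · P(m))⁻¹` (`cocycle_eq`), and `P(k+n) = P(k) · Ω(φ)`.
So `φ` is a coboundary up to the failure of `P` to be `n`-periodic, which `Ω(φ)` measures.

Taking `m = n` shows that `Ω(φ)` is invariant. Restricting `P` to the representatives
`0, …, n-1` turns the formula into `φ = Ψ(Ω(φ)) · ∂P`, since the exponent of `Ψ` is the carry in the
addition of representatives. If `Ω(φ)` is the norm of `lam`, dividing `P` by the partial norms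
`∏_{ν<k} ν · lam`, which form a 1-cocycle on the natural numbers, makes it `n`-periodic, so `φ`
is a coboundary. That `Ω` sends coboundaries to norms is a telescoping product, and `Ω(Ψ(x)) = x`
for `n ≥ 2` because exactly one carry occurs; for `n = 1` every element is a norm.
-/

/-!
Statement 0: For a cyclic group `H = ℤ/nℤ` (with generator `h = 1`) acting on a
(multiplicative) abelian group `Λ` by group automorphisms, the map
`Ω(φ) = ∏_{ν=0}^{n-1} φ(νh, h)` induces a group isomorphism
`H²(H, Λ) ≅ Λ^H / N_H(Λ)`, with inverse induced by
`Ψ(x)(ih, jh) = x^(⌊(i+j)/n⌋ - ⌊i/n⌋ - ⌊j/n⌋)`.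
-/

namespace Stmt0

variable {n : ℕ} {Λ : Type*} [CommGroup Λ]

/-- The (normalized) 2-cocycle condition for an action `ρ` of `ZMod n` on `Λ`. -/
def IsCocycle (ρ : ZMod n → (Λ ≃* Λ)) (φ : ZMod n → ZMod n → Λ) : Prop :=
  (∀ x y z : ZMod n, φ x y * φ (x + y) z = ρ x (φ y z) * φ x (y + z)) ∧
    ∀ x : ZMod n, φ x 0 = 1 ∧ φ 0 x = 1

/-- The 2-coboundary condition for an action `ρ` of `ZMod n` on `Λ`. -/
def IsCoboundary (ρ : ZMod n → (Λ ≃* Λ)) (φ : ZMod n → ZMod n → Λ) : Prop :=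
  ∃ ψ : ZMod n → Λ, ∀ x y : ZMod n, φ x y = ψ (x + y) * (ψ x)⁻¹ * (ρ x (ψ y))⁻¹

/-- `Ω(φ) = ∏_{ν=0}^{n-1} φ(νh, h)`, where the generator is `h = 1`. -/
def Omega (n : ℕ) {Λ : Type*} [CommGroup Λ] (φ : ZMod n → ZMod n → Λ) : Λ :=
  ∏ ν ∈ Finset.range n, φ (ν : ZMod n) 1

/-- `x` is an `H`-invariant element of `Λ`, i.e. `x ∈ Λ^H`. -/
def Invariant (ρ : ZMod n → (Λ ≃* Λ)) (x : Λ) : Prop := ∀ g : ZMod n, ρ g x = x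

/-- `x` belongs to the norm subgroup `N_H(Λ) = {∏_{g ∈ H} g·λ : λ ∈ Λ}`,
with the product over `H` written as a product over the representatives `νh`, `0 ≤ ν < n`. -/
def IsNorm (n : ℕ) {Λ : Type*} [CommGroup Λ] (ρ : ZMod n → (Λ ≃* Λ)) (x : Λ) : Prop :=
  ∃ lam : Λ, x = ∏ ν ∈ Finset.range n, ρ (ν : ZMod n) lam

/-- `Ψ(x)(ih, jh) = x^(⌊(i+j)/n⌋ - ⌊i/n⌋ - ⌊j/n⌋)` for the representatives
`i, j ∈ {0, …, n-1}` of the arguments. -/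
def Psi (n : ℕ) {Λ : Type*} [CommGroup Λ] (x : Λ) : ZMod n → ZMod n → Λ := fun a b =>
  x ^ ((((a.val + b.val) / n : ℕ) : ℤ) - ((a.val / n : ℕ) : ℤ) - ((b.val / n : ℕ) : ℤ))

/-- The exponent in `Psi` simplifies, because `a.val` and `b.val` are smaller than `n`. -/
theorem psi_eq [NeZero n] (x : Λ) (a b : ZMod n) : Psi n x a b = x ^ ((a.val + b.val) / n) := by
  rw [Psi, Nat.div_eq_of_lt (ZMod.val_lt a), Nat.div_eq_of_lt (ZMod.val_lt b), Nat.cast_zero,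
    sub_zero, sub_zero, zpow_natCast]

/-- The partial product `∏_{ν<k} φ(ν, 1)`; its value at `k = n` is `Ω(φ)`. -/
def partialOmega (φ : ZMod n → ZMod n → Λ) (k : ℕ) : Λ :=
  ∏ ν ∈ Finset.range k, φ (ν : ZMod n) 1

/-- The partial norm `∏_{ν<k} ρ(ν)(lam)`; its value at `k = n` is the norm of `lam`. -/
def partialNorm (ρ : ZMod n → (Λ ≃* Λ)) (lam : Λ) (k : ℕ) : Λ :=
  ∏ ν ∈ Finset.range k, ρ (ν : ZMod n) lam

theorem partialOmega_add_n (φ : ZMod n → ZMod n → Λ) (k : ℕ) :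
    partialOmega φ (k + n) = partialOmega φ k * Omega n φ := by
  rw [add_comm k n, partialOmega, Finset.prod_range_add, mul_comm]
  simp [partialOmega, Omega]

/-- Over the natural numbers, a cocycle is the coboundary of its partial products: this is the
cocycle identity with third argument `1`, summed up by induction on `m`. -/
theorem cocycle_eq {ρ : ZMod n → (Λ ≃* Λ)} {φ : ZMod n → ZMod n → Λ} (hφ : IsCocycle ρ φ)
    (k m : ℕ) :
    φ k m = partialOmega φ (k + m) * (partialOmega φ k)⁻¹ * (ρ k (partialOmega φ m))⁻¹ := by
  induction m with
  | zero => simp [partialOmega, (hφ.2 k).1]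
  | succ m ih =>
    have h := hφ.1 k m 1
    have h1 : partialOmega φ (k + (m + 1)) =
        partialOmega φ (k + m) * φ ((k : ZMod n) + (m : ZMod n)) 1 := by
      rw [← add_assoc, partialOmega, Finset.prod_range_succ]
      simp [partialOmega]
    have h2 : partialOmega φ (m + 1) = partialOmega φ m * φ (m : ZMod n) 1 := by
      rw [partialOmega, Finset.prod_range_succ]
      rfl
    rw [ih] at h
    rw [h1, h2, map_mul, Nat.cast_succ, eq_inv_mul_of_mul_eq h.symm, mul_inv]
    simp only [mul_comm, mul_left_comm, mul_assoc]

theorem partialNorm_add {ρ : ZMod n → (Λ ≃* Λ)}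
    (hρadd : ∀ g h : ZMod n, ∀ a : Λ, ρ (g + h) a = ρ g (ρ h a)) (lam : Λ) (k m : ℕ) :
    partialNorm ρ lam (k + m) = partialNorm ρ lam k * ρ k (partialNorm ρ lam m) := by
  rw [partialNorm, Finset.prod_range_add]
  simp [partialNorm, hρadd]

theorem eq_mod_mul_pow {f : ℕ → Λ} {c : Λ} (hf : ∀ k, f (k + n) = f k * c) (k : ℕ) :
    f k = f (k % n) * c ^ (k / n) := by
  have key : ∀ q r : ℕ, f (r + n * q) = f r * c ^ q := by
    intro q r
    induction q with
    | zero => simp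
    | succ q ih => rw [Nat.mul_succ, ← add_assoc, hf, ih, pow_succ, mul_assoc]
  rw [← key, Nat.mod_add_div]

/-- Both sides of the cocycle identity for `Ψ(x)` have exponent `⌊(a+b+c)/n⌋`. -/
theorem carry_add (hn : 0 < n) (a b c : ℕ) :
    (a + b) / n + ((a + b) % n + c) / n = (a + b + c) / n := by
  conv_rhs => rw [← Nat.div_add_mod (a + b) n]
  rw [add_assoc, Nat.mul_add_div hn]

theorem psi_isCocycle [NeZero n] {ρ : ZMod n → (Λ ≃* Λ)} {x : Λ} (hx : Invariant ρ x) :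
    IsCocycle ρ (Psi n x) := by
  have hn : 0 < n := Nat.pos_of_neZero n
  refine ⟨fun a b c => ?_, fun a => ?_⟩
  · simp only [psi_eq, map_pow, hx a, ← pow_add, ZMod.val_add]
    rw [carry_add hn, add_comm a.val ((b.val + c.val) % n), carry_add hn]
    congr 2
    ring
  · simp [psi_eq, Nat.div_eq_of_lt (ZMod.val_lt a)]

/-- For `n ≥ 2` the only carry among the `(ν, 1)` with `ν < n` is at `ν = n - 1`. -/
theorem omega_psi (hn : 2 ≤ n) (x : Λ) : Omega n (Psi n x) = x := by
  obtain ⟨m, rfl⟩ : ∃ m, n = m + 1 := ⟨n - 1, by omega⟩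
  have : Fact (1 < m + 1) := ⟨by omega⟩
  rw [Omega, Finset.prod_range_succ, Finset.prod_eq_one]
  · rw [psi_eq, ZMod.val_natCast_of_lt (by omega), ZMod.val_one, Nat.div_self (by omega)]
    simp
  · intro ν hν
    have hν' := Finset.mem_range.1 hν
    rw [psi_eq, ZMod.val_natCast_of_lt (by omega), ZMod.val_one, Nat.div_eq_of_lt (by omega),
      pow_zero]

/-- `Ω` takes values in `Λ^H`, sends 2-coboundaries into `N_H(Λ)`, and induces a group
isomorphism `H²(H, Λ) ≅ Λ^H / N_H(Λ)`, with inverse induced by `Ψ`. -/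
theorem omega_induces_iso (n : ℕ) (hn : 1 ≤ n) (Λ : Type*) [CommGroup Λ]
    (ρ : ZMod n → (Λ ≃* Λ)) (hρ₀ : ρ 0 = MulEquiv.refl Λ)
    (hρadd : ∀ g h : ZMod n, ∀ a : Λ, ρ (g + h) a = ρ g (ρ h a)) :
    -- `Ω(φ)` lies in the invariant subgroup `Λ^H`
    (∀ φ : ZMod n → ZMod n → Λ, IsCocycle ρ φ → Invariant ρ (Omega n φ)) ∧
    -- `Ω` is multiplicative on 2-cocycles (it is a group homomorphism)
    (∀ φ φ' : ZMod n → ZMod n → Λ, IsCocycle ρ φ → IsCocycle ρ φ' →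
      Omega n (fun a b => φ a b * φ' a b) = Omega n φ * Omega n φ') ∧
    -- `Ω` maps 2-coboundaries into the norm subgroup `N_H(Λ)`
    (∀ φ : ZMod n → ZMod n → Λ, IsCocycle ρ φ → IsCoboundary ρ φ → IsNorm n ρ (Omega n φ)) ∧
    -- injectivity of the induced map on `H²`
    (∀ φ : ZMod n → ZMod n → Λ, IsCocycle ρ φ → IsNorm n ρ (Omega n φ) → IsCoboundary ρ φ) ∧
    -- `Ψ(x)` is a 2-cocycle for every invariant `x`
    (∀ x : Λ, Invariant ρ x → IsCocycle ρ (Psi n x)) ∧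
    -- `Ω ∘ Ψ` is the identity modulo norms
    (∀ x : Λ, Invariant ρ x → IsNorm n ρ (Omega n (Psi n x) * x⁻¹)) ∧
    -- `Ψ ∘ Ω` is the identity modulo coboundaries
    (∀ φ : ZMod n → ZMod n → Λ, IsCocycle ρ φ →
      IsCoboundary ρ (fun a b => φ a b * (Psi n (Omega n φ) a b)⁻¹)) := by
  have : NeZero n := ⟨by omega⟩
  have hcast : ∀ a : ZMod n, ((a.val : ℕ) : ZMod n) = a := ZMod.natCast_zmod_val
  refine ⟨?_, ?_, ?_, ?_, fun x hx => psi_isCocycle hx, ?_, ?_⟩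
  · intro φ hφ g
    -- `φ(g, n) = φ(g, 0) = 1`, and the formula for it equals `Ω(φ) / ρ(g)(Ω(φ))`.
    have h := cocycle_eq hφ g.val n
    rw [hcast, ZMod.natCast_self, (hφ.2 g).1, partialOmega_add_n, mul_inv_cancel_comm] at h
    exact (mul_inv_eq_one.1 h.symm).symm
  · intro φ φ' _ _
    simp [Omega, Finset.prod_mul_distrib]
  · rintro φ _ ⟨ψ, hψ⟩
    refine ⟨(ψ 1)⁻¹, ?_⟩
    have htel := Finset.prod_range_div (fun k : ℕ => ψ (k : ZMod n)) n
    simp only [Nat.cast_succ, ZMod.natCast_self, Nat.cast_zero, div_self', div_eq_mul_inv] at htel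
    simp only [Omega, hψ, map_inv]
    rw [Finset.prod_mul_distrib, htel, one_mul]
  · rintro φ hφ ⟨lam, hlam⟩
    have hper : ∀ k, partialOmega φ (k + n) * (partialNorm ρ lam (k + n))⁻¹ =
        partialOmega φ k * (partialNorm ρ lam k)⁻¹ * 1 := by
      intro k
      have hN : partialNorm ρ lam n = Omega n φ := hlam.symm
      rw [partialOmega_add_n, add_comm k n, partialNorm_add hρadd, hN, ZMod.natCast_self, hρ₀]
      simp [mul_comm, mul_left_comm, mul_assoc]
    refine ⟨fun a => partialOmega φ a.val * (partialNorm ρ lam a.val)⁻¹, fun a b => ?_⟩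
    have h := cocycle_eq hφ a.val b.val
    have h2 := eq_mod_mul_pow
      (f := fun k => partialOmega φ k * (partialNorm ρ lam k)⁻¹) hper (a.val + b.val)
    simp only [one_pow, mul_one] at h2
    beta_reduce
    rw [ZMod.val_add, ← h2, partialNorm_add hρadd]
    rw [hcast, hcast] at h
    rw [h, hcast, map_mul, map_inv]
    simp only [mul_inv, inv_inv]
    generalize partialNorm ρ lam a.val = u
    generalize ρ a (partialNorm ρ lam b.val) = v
    generalize ρ a (partialOmega φ b.val) = w
    rw [← div_eq_one]
    simp [mul_comm, mul_left_comm, mul_assoc]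
  · intro x _
    rcases hn.eq_or_lt with rfl | hn2
    · -- For `n = 1` the norm is the identity map, so every element is a norm.
      exact ⟨_, by simp [hρ₀]; rfl⟩
    · exact ⟨1, by simp [omega_psi hn2]⟩
  · intro φ hφ
    refine ⟨fun a => partialOmega φ a.val, fun a b => ?_⟩
    have h := cocycle_eq hφ a.val b.val
    rw [hcast, hcast, eq_mod_mul_pow (partialOmega_add_n φ) (a.val + b.val)] at h
    simp only [psi_eq]
    rw [h, ZMod.val_add, mul_inv_eq_iff_eq_mul]
    simp only [mul_comm, mul_left_comm, mul_assoc]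

end Stmt0
end

section
/- Let D be a divisible abelian group written multiplicatively, w: D → ℚ a group homomorphism, X and Y free abelian groups of the same finite rank r, X^∨ := Hom(X, ℤ), φ: Y → X an injective homomorphism, and β: Y → X^∨ an injective homomorphism with finite cokernel; set N := |X^∨/β(Y)| and let μ: X^∨ → X be the unique homomorphism with μ(β(y)) = N·φ(y) for all y ∈ Y (it exists because N annihilates X^∨/β(Y) and X is torsion-free). Let τ: Y × X → D be biadditive with w(τ(y,x)) = (β(y))(x) and τ(y, φ(z)) = τ(z, φ(y)) for all y, z ∈ Y and x ∈ X. Then there exists a biadditive map τ^e: X^∨ × X → D such that: (a) τ^e(β(y), x) = τ(y, x) for all y ∈ Y, x ∈ X; (b) w(τ^e(u, x)) = u(x) for all u ∈ X^∨, x ∈ X; (c) τ^e(u, μ(v)) = τ^e(v, μ(u)) for all u, v ∈ X^∨. Moreover, setting ψ^e(u) := τ^e(u, μ(u)), one has ψ^e(u+v) = ψ^e(u)·ψ^e(v)·τ^e(u, μ(v))² for all u, v ∈ X^∨, and if ψ: Y → D satisfies ψ(y)² = τ(y, φ(y)) for all y ∈ Y, then ψ^e(β(y)) = ψ(y)^{2N}.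 -/
/-!
Put `β` in Smith normal form: there are bases `e i` of `X^∨` and `f i` of `Y` and nonzero integers
`a i` with `β (f i) = a i • e i`, and then `N = ∏ |a i|` (`exists_smith_basis`). Since `D` is
divisible, `τ (f i)` has an `a i`-th root in `Hom(X, D)`, constructed on a basis of `X`; taking
these roots as the values on the `e i` gives a biadditive extension `τ^e` (`exists_extension`).

Every such extension has the required properties. The formula for `w` follows from
`a i · w(τ^e(e i, x)) = w(τ(f i, x)) = a i · (e i)(x)`, as `ℚ` is torsion-free. For the symmetry
(`extension_symm`) it suffices to compare `e i` and `e j` with `i ≠ j`. Then `a i * a j` divides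
`N`, say `N = a i * a j * k`, so `μ (e j) = (a i * k) • φ (f j)` because `X` is torsion-free, and
`τ^e(e i, μ (e j)) = τ(f i, φ (f j)) ^ k`, which is symmetric in `i` and `j`.
The assertions on `ψ^e` are formal consequences of biadditivity and symmetry.
-/

open Module

/-- Smith normal form of an injective homomorphism with finite cokernel, with the order of the
cokernel expressed through the elementary divisors (which need not be positive here). -/
theorem exists_smith_basis {V Y : Type*} [AddCommGroup V] [AddCommGroup Y]
    [Module.Free ℤ V] [Module.Finite ℤ V]
    (β : Y →+ V) (hβ : Function.Injective β) (hfin : Finite (V ⧸ β.range)) :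
    ∃ (n : ℕ) (e : Basis (Fin n) ℤ V) (f : Basis (Fin n) ℤ Y) (a : Fin n → ℤ),
      (∀ i, a i ≠ 0) ∧ (∀ i, β (f i) = a i • e i) ∧
      Nat.card (V ⧸ β.range) = ∏ i, (a i).natAbs := by
  let S : Submodule ℤ V := LinearMap.range β.toIntLinearMap
  have hS : S.toAddSubgroup = β.range := by
    ext x; simp [S]
  have hcard : Nat.card (V ⧸ S) = Nat.card (V ⧸ β.range) := by
    rw [← hS]; rfl
  have hfinS : Finite (V ⧸ S) := by
    rw [← hS] at hfin; exact hfin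
  have hrank := (Submodule.finiteQuotient_iff S).mp hfinS
  let b := Module.finBasis ℤ V
  let g : Y ≃ₗ[ℤ] S := LinearEquiv.ofInjective β.toIntLinearMap hβ
  refine ⟨_, Submodule.smithNormalFormTopBasis b hrank,
    (Submodule.smithNormalFormBotBasis b hrank).map g.symm,
    Submodule.smithNormalFormCoeffs b hrank,
    Submodule.smithNormalFormCoeffs_ne_zero b hrank, fun i => ?_, ?_⟩
  · rw [← Submodule.smithNormalFormBotBasis_def b hrank i, Basis.map_apply]
    exact congrArg Subtype.val (g.apply_symm_apply (Submodule.smithNormalFormBotBasis b hrank i))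
  · rw [← hcard, Nat.card_congr (Submodule.quotientEquivPiZMod S b hrank).toEquiv, Nat.card_pi]
    simp

/-- A bilinear map with values in a divisible group extends along a map in diagonal form. -/
theorem exists_extension {ι V X Y E : Type*} [AddCommGroup V] [AddCommGroup X] [AddCommGroup Y]
    [AddCommGroup E] [Module.Free ℤ X]
    (hdiv : ∀ (d : E) (m : ℤ), m ≠ 0 → ∃ c : E, m • c = d)
    (β : Y →+ V) (e : Basis ι ℤ V) (f : Basis ι ℤ Y) (a : ι → ℤ) (ha : ∀ i, a i ≠ 0)
    (hef : ∀ i, β (f i) = a i • e i) (T : Y →ₗ[ℤ] X →ₗ[ℤ] E) :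
    ∃ L : V →ₗ[ℤ] X →ₗ[ℤ] E, ∀ y, L (β y) = T y := by
  let b := Module.Free.chooseBasis ℤ X
  choose c hc using fun i k => hdiv (T (f i) (b k)) (a i) (ha i)
  let L : V →ₗ[ℤ] X →ₗ[ℤ] E := e.constr ℤ fun i => b.constr ℤ (c i)
  refine ⟨L, fun y => ?_⟩
  have h : L ∘ₗ β.toIntLinearMap = T := by
    refine f.ext fun i => b.ext fun k => ?_
    simp [hef, L, Basis.constr_basis, hc]
  exact LinearMap.congr_fun h y

/-- Symmetry of any extension; the divisibility `a i * a j ∣ N` for `i ≠ j` is what makes the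
choice of roots irrelevant. -/
theorem extension_symm {ι V X Y E : Type*} [Fintype ι] [AddCommGroup V] [AddCommGroup X]
    [AddCommGroup Y] [AddCommGroup E] [IsAddTorsionFree X]
    (φ : Y →+ X) (β : Y →+ V) (μ : V →+ X) (N : ℕ) (hμ : ∀ y, μ (β y) = N • φ y)
    (e : Basis ι ℤ V) (f : Basis ι ℤ Y) (a : ι → ℤ) (ha : ∀ i, a i ≠ 0)
    (hef : ∀ i, β (f i) = a i • e i) (hN : N = ∏ i, (a i).natAbs)
    (T : Y →ₗ[ℤ] X →ₗ[ℤ] E) (hT : ∀ y z, T y (φ z) = T z (φ y))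
    (L : V →ₗ[ℤ] X →ₗ[ℤ] E) (hL : ∀ y, L (β y) = T y) (u v : V) :
    L u (μ v) = L v (μ u) := by
  classical
  have hdvd : ∀ i j, i ≠ j → ∃ k : ℤ, (N : ℤ) = a i * a j * k := by
    intro i j hij
    have h : a i * a j ∣ (N : ℤ) := by
      rw [← Int.natAbs_dvd_natAbs, Int.natAbs_mul, Int.natAbs_natCast, hN,
        ← Finset.prod_pair (f := fun i => (a i).natAbs) hij]
      exact Finset.prod_dvd_prod_of_subset _ _ _ (Finset.subset_univ _)
    exact h
  have key : ∀ i j k, (N : ℤ) = a i * a j * k → L (e i) (μ (e j)) = k • T (f i) (φ (f j)) := by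
    intro i j k hk
    have h1 : μ (e j) = (a i * k) • φ (f j) := by
      apply zsmul_right_injective (ha j)
      have := hμ (f j)
      rw [hef, map_zsmul, ← natCast_zsmul, hk] at this
      change a j • μ (e j) = a j • (a i * k) • φ (f j)
      rw [this, ← mul_smul]
      congr 1; ring
    rw [h1, ← hL, hef, map_smul, map_smul, LinearMap.smul_apply, ← mul_smul, mul_comm]
  have h : L.compl₂ μ.toIntLinearMap = (L.compl₂ μ.toIntLinearMap).flip := by
    refine e.ext fun i => e.ext fun j => ?_
    change L (e i) (μ (e j)) = L (e j) (μ (e i))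
    by_cases hij : i = j
    · rw [hij]
    · obtain ⟨k, hk⟩ := hdvd i j hij
      rw [key i j k hk, key j i k (by rw [hk]; ring), hT]
  exact LinearMap.congr_fun₂ h u v

theorem stmt4 (D : Type*) [CommGroup D]
    -- `D` is divisible
    (hdiv : ∀ (d : D) (m : ℕ), 0 < m → ∃ c : D, c ^ m = d)
    -- `w : D → ℚ` is a group homomorphism
    (w : D → ℚ) (hw : ∀ a b : D, w (a * b) = w a + w b)
    -- `X` and `Y` are free abelian groups of the same finite rank `r`
    (X Y : Type*) [AddCommGroup X] [AddCommGroup Y]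
    [Module.Free ℤ X] [Module.Finite ℤ X] [Module.Free ℤ Y] [Module.Finite ℤ Y]
    (r : ℕ) (hrX : Module.finrank ℤ X = r) (hrY : Module.finrank ℤ Y = r)
    -- `φ : Y → X` is an injective homomorphism
    (φ : Y →+ X) (hφ : Function.Injective φ)
    -- `β : Y → X^∨` is an injective homomorphism with finite cokernel
    (β : Y →+ (X →+ ℤ)) (hβ : Function.Injective β)
    (hfin : Finite ((X →+ ℤ) ⧸ β.range))
    -- `N := |X^∨ / β(Y)|`
    (N : ℕ) (hN : N = Nat.card ((X →+ ℤ) ⧸ β.range))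
    -- `μ : X^∨ → X` is the (unique) homomorphism with `μ(β(y)) = N·φ(y)`
    (μ : (X →+ ℤ) →+ X) (hμ : ∀ y : Y, μ (β y) = N • φ y)
    -- `τ : Y × X → D` is biadditive with `w(τ(y,x)) = β(y)(x)` and `τ(y, φz) = τ(z, φy)`
    (τ : Y → X → D)
    (hτ₁ : ∀ (y y' : Y) (x : X), τ (y + y') x = τ y x * τ y' x)
    (hτ₂ : ∀ (y : Y) (x x' : X), τ y (x + x') = τ y x * τ y x')
    (hτw : ∀ (y : Y) (x : X), w (τ y x) = ((β y) x : ℚ))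
    (hτsym : ∀ y z : Y, τ y (φ z) = τ z (φ y)) :
    ∃ τe : (X →+ ℤ) → X → D,
      -- `τ^e` is biadditive
      (∀ (u u' : X →+ ℤ) (x : X), τe (u + u') x = τe u x * τe u' x) ∧
      (∀ (u : X →+ ℤ) (x x' : X), τe u (x + x') = τe u x * τe u x') ∧
      -- (a) `τ^e(β(y), x) = τ(y, x)`
      (∀ (y : Y) (x : X), τe (β y) x = τ y x) ∧
      -- (b) `w(τ^e(u, x)) = u(x)`
      (∀ (u : X →+ ℤ) (x : X), w (τe u x) = (u x : ℚ)) ∧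
      -- (c) `τ^e(u, μ(v)) = τ^e(v, μ(u))`
      (∀ u v : X →+ ℤ, τe u (μ v) = τe v (μ u)) ∧
      -- with `ψ^e(u) := τ^e(u, μ(u))`:
      -- `ψ^e(u+v) = ψ^e(u)·ψ^e(v)·τ^e(u, μ(v))²`
      (∀ u v : X →+ ℤ,
        τe (u + v) (μ (u + v)) = τe u (μ u) * τe v (μ v) * τe u (μ v) ^ 2) ∧
      -- if `ψ(y)² = τ(y, φ(y))` for all `y`, then `ψ^e(β(y)) = ψ(y)^(2N)`
      (∀ ψ : Y → D, (∀ y : Y, ψ y ^ 2 = τ y (φ y)) →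
        ∀ y : Y, τe (β y) (μ (β y)) = ψ y ^ (2 * N)) := by
  have hdiv' : ∀ (d : Additive D) (m : ℤ), m ≠ 0 → ∃ c : Additive D, m • c = d := by
    intro d m hm
    obtain ⟨c, hc⟩ := hdiv d.toMul m.natAbs (Int.natAbs_pos.mpr hm)
    have hc' : (m.natAbs : ℤ) • Additive.ofMul c = d := by
      rw [natCast_zsmul]; exact congrArg Additive.ofMul hc
    rcases Int.natAbs_eq m with h | h
    · exact ⟨Additive.ofMul c, by rw [h]; exact hc'⟩
    · exact ⟨-Additive.ofMul c, by rw [h, neg_smul, smul_neg, neg_neg]; exact hc'⟩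
  let W : Additive D →+ ℚ := AddMonoidHom.mk' (fun d => w d.toMul) fun c d => hw _ _
  let T : Y →ₗ[ℤ] X →ₗ[ℤ] Additive D := AddMonoidHom.toIntLinearMap <|
    AddMonoidHom.mk' (fun y => AddMonoidHom.toIntLinearMap <|
      AddMonoidHom.mk' (fun x => Additive.ofMul (τ y x)) fun x x' => hτ₂ y x x')
      fun y y' => LinearMap.ext fun x => hτ₁ y y' x
  obtain ⟨n, e, f, a, ha, hef, hcard⟩ := exists_smith_basis β hβ hfin
  obtain ⟨L, hL⟩ := exists_extension hdiv' β e f a ha hef T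
  have hX : IsAddTorsionFree X := IsAddTorsionFree.of_isTorsionFree ℤ X
  have hsymm : ∀ u v, L u (μ v) = L v (μ u) :=
    extension_symm φ β μ N hμ e f a ha hef (hN.trans hcard) T hτsym L hL
  have hadd₁ : ∀ u u' x, L (u + u') x = L u x + L u' x := fun u u' x => by
    rw [map_add, LinearMap.add_apply]
  have hval : ∀ (x : X) (u : X →+ ℤ), W (L u x) = (u x : ℚ) := by
    intro x
    let P : (X →+ ℤ) →ₗ[ℤ] ℚ := W.toIntLinearMap ∘ₗ L.flip x
    let Q : (X →+ ℤ) →ₗ[ℤ] ℚ :=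
      ((Int.castAddHom ℚ).comp (AddMonoidHom.eval x)).toIntLinearMap
    have hPQ : P = Q := by
      refine e.ext fun i => ?_
      -- the two functionals agree on `a i • e i = β (f i)`, and `ℚ` is torsion-free
      apply smul_right_injective ℚ (ha i)
      change a i • P (e i) = a i • Q (e i)
      rw [← map_smul P, ← map_smul Q, ← hef]
      change W (L (β (f i)) x) = ((β (f i) x : ℤ) : ℚ)
      rw [hL]
      exact hτw (f i) x
    exact fun u => LinearMap.congr_fun hPQ u
  refine ⟨fun u x => (L u x).toMul, hadd₁, fun u x x' => map_add (L u) x x', ?_,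
    fun u x => hval x u, hsymm, fun u v => ?_, fun ψ hψ y => ?_⟩
  · intro y x
    exact LinearMap.congr_fun (hL y) x
  · change L (u + v) (μ (u + v)) = L u (μ u) + L v (μ v) + 2 • L u (μ v)
    rw [hadd₁, map_add, map_add, map_add, hsymm v u]
    abel
  · change L (β y) (μ (β y)) = (2 * N) • Additive.ofMul (ψ y)
    have h : (2 : ℕ) • Additive.ofMul (ψ y) = T y (φ y) := hψ y
    rw [hμ, hL, map_nsmul, mul_comm, mul_smul, h]
end

section
/- Let A and B be abelian groups (written additively), Γ a commutative group (written multiplicatively), λ: A → B a homomorphism, and m: A × B → Γ a map satisfying m(u+u′, x) = m(u, x)·m(u′, x + λ(u)) for all u, u′ ∈ A and x ∈ B. Define ψ(u) := m(u, 0) and τ(u, x) := m(u, x)·ψ(u)⁻¹. Assume that τ is additive in the second variable, i.e., τ(u, x+x′) = τ(u,x)·τ(u,x′) for all u ∈ A, x, x′ ∈ B. Then: (a) m(0, x) = 1, ψ(0) = 1 and τ(0, x) = 1; (b) τ is also additive in the first variable, i.e., τ(u+u′, x) = τ(u,x)·τ(u′,x), so τ is biadditive; (c) ψ(u+u′) =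 ψ(u)·ψ(u′)·τ(u′, λ(u)) for all u, u′ ∈ A. -/
/-!
Write `m u x = τ u x * ψ u`. The functional equation at `x = 0` is the quasi-quadratic law for `ψ`.
At general `x`, additivity of `τ u'` splits `τ u' (x + lam u)`, and dividing by the law for `ψ`
cancels the factor `τ u' (lam u)`, which leaves additivity of `τ` in the first variable.
-/

theorem stmt5 (A B : Type*) [AddCommGroup A] [AddCommGroup B] (Γ : Type*) [CommGroup Γ]
    (lam : A →+ B) (m : A → B → Γ)
    (hm : ∀ (u u' : A) (x : B), m (u + u') x = m u x * m u' (x + lam u))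
    (ψ : A → Γ) (hψ : ∀ u : A, ψ u = m u 0)
    (τ : A → B → Γ) (hτ : ∀ (u : A) (x : B), τ u x = m u x * (ψ u)⁻¹)
    (hadd : ∀ (u : A) (x x' : B), τ u (x + x') = τ u x * τ u x') :
    -- (a) normalization
    (∀ x : B, m 0 x = 1) ∧ ψ 0 = 1 ∧ (∀ x : B, τ 0 x = 1) ∧
    -- (b) `τ` is also additive in the first variable (hence biadditive)
    (∀ (u u' : A) (x : B), τ (u + u') x = τ u x * τ u' x) ∧
    -- (c) the quasi-quadratic functional equation for `ψ`
    (∀ u u' : A, ψ (u + u') = ψ u * ψ u' * τ u' (lam u)) := by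
  have hmτ : ∀ u x, m u x = τ u x * ψ u := fun u x => by rw [hτ, inv_mul_cancel_right]
  have hm0 : ∀ x, m 0 x = 1 := fun x => by simpa using hm 0 0 x
  have hψ0 : ψ 0 = 1 := by rw [hψ, hm0]
  have hquad : ∀ u u', ψ (u + u') = ψ u * ψ u' * τ u' (lam u) := fun u u' => by
    rw [hψ (u + u'), hm, zero_add, ← hψ, hmτ u', mul_assoc, mul_comm (ψ u')]
  refine ⟨hm0, hψ0, fun x => by rw [hτ, hm0, hψ0, inv_one, mul_one], fun u u' x => ?_, hquad⟩
  rw [hτ (u + u'), mul_inv_eq_iff_eq_mul, hm, hmτ u, hmτ u', hadd, hquad]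
  ac_rfl
end

section
/- Let V be a finite-dimensional real vector space (with its standard topology), C ⊆ V a closed convex set with 0 in the interior of C, L an abelian group, and μ*: L → V an injective homomorphism such that the translates μ*(v) + C (v ∈ L) have pairwise disjoint interiors. Fix α ∈ C and let Star(α) := ⋃ {μ*(v) + C : v ∈ L, α ∈ μ*(v) + C}, and for n ≥ 1 let nStar(α) denote the n-fold sumset. Then: (a) if m ≥ 4 is an integer, w ∈ L, and (μ*(mw) + Star(α)) ∩ Star(α) ≠ ∅, then w = 0; (b) more generally, if m, n are positive integers with m ≥ 4n, x ∈ nStar(α), and x + μ*(mw) ∈ nStar(α) for some w ∈ L, then w = 0. -/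
/-!
Statement 7: For a closed convex set `C` with `0` in its interior in a finite-dimensional
real vector space, and an injective homomorphism `μ* : L → V` whose translates `μ*(v) + C`
have pairwise disjoint interiors, points of `Star(α)` (resp. `nStar(α)`) that differ by
`μ*(m·w)` with `m ≥ 4` (resp. `m ≥ 4n`) force `w = 0`.
-/

/-!
A point of a translate `μ v + C` containing `α` has the form `α + (c - a)` with `a, c ∈ C`.
Hence if two points of `nStar(α)` differ by `m • μ w`, the `α`'s cancel and
`m • μ w = ∑ (aᵢ + dᵢ) - ∑ (bᵢ + cᵢ)` with all of the `aᵢ, bᵢ, cᵢ, dᵢ` in `C`. Each of the two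
sums has `2n ≤ m / 2` terms, so after division by `m` it is an average of points of `C`, shrunk
towards the interior point `0` by a factor at most `1 / 2`, and hence an interior point of `C`
(`smul_sum_mem_interior`). So `μ w = p - q` with `p, q ∈ interior C`, and `p` is interior to both
`C` and `μ w + C`; disjointness of the interiors forces `w = 0`. Part (a) is the case `n = 1`.
-/

open Pointwise

namespace Stmt7

/-- The `n`-fold sumset `nS = {s₁ + ⋯ + s_n : sᵢ ∈ S}`. -/
def sumset {V : Type*} [AddCommMonoid V] (n : ℕ) (S : Set V) : Set V :=
  {x | ∃ f : Fin n → V, (∀ i, f i ∈ S) ∧ x = ∑ i, f i}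

/-- The sum of `2n` points of `C`, divided by `m ≥ 4n`, is interior to `C`. -/
theorem smul_sum_mem_interior {V : Type*} [NormedAddCommGroup V] [NormedSpace ℝ V]
    {C : Set V} (hconv : Convex ℝ C) (h0 : (0 : V) ∈ interior C) {m n : ℕ} (hn : 0 < n)
    (hmn : 4 * n ≤ m) (f g : Fin n → V) (hf : ∀ i, f i ∈ C) (hg : ∀ i, g i ∈ C) :
    (m : ℝ)⁻¹ • ∑ i, (f i + g i) ∈ interior C := by
  have hn' : (0 : ℝ) < n := by exact_mod_cast hn
  have hmn' : (4 : ℝ) * n ≤ m := by exact_mod_cast hmn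
  have hm' : (0 : ℝ) < m := by linarith
  have havg : ∑ i, (n : ℝ)⁻¹ • ((1 / 2 : ℝ) • f i + (1 / 2 : ℝ) • g i) ∈ C := by
    refine hconv.sum_mem (fun i _ => by positivity) ?_ fun i _ =>
      hconv (hf i) (hg i) (by norm_num) (by norm_num) (by norm_num)
    simp [hn'.ne']
  have hlt : (2 * n / m : ℝ) < 1 := by
    rw [div_lt_one hm']
    linarith
  have key := hconv.combo_interior_self_mem_interior h0 havg
    (a := 1 - 2 * n / m) (b := 2 * n / m) (by linarith) (by positivity) (by ring)
  convert key using 1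
  rw [smul_zero, zero_add, Finset.smul_sum, Finset.smul_sum]
  refine Finset.sum_congr rfl fun i _ => ?_
  rw [← smul_add, smul_smul, smul_smul]
  congr 1
  field_simp

theorem stmt7 (V : Type*) [NormedAddCommGroup V] [NormedSpace ℝ V] [FiniteDimensional ℝ V]
    (C : Set V) (hclosed : IsClosed C) (hconv : Convex ℝ C) (h0 : (0 : V) ∈ interior C)
    (L : Type*) [AddCommGroup L] (μ : L →+ V) (hinj : Function.Injective μ)
    (hdisj : ∀ v v' : L, v ≠ v' →
      Disjoint (interior (μ v +ᵥ C)) (interior (μ v' +ᵥ C)))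
    (α : V) (hα : α ∈ C) :
    -- (a)
    (∀ (m : ℕ) (w : L), 4 ≤ m →
      ((μ (m • w) +ᵥ {x : V | ∃ v : L, α ∈ μ v +ᵥ C ∧ x ∈ μ v +ᵥ C}) ∩
        {x : V | ∃ v : L, α ∈ μ v +ᵥ C ∧ x ∈ μ v +ᵥ C}).Nonempty → w = 0) ∧
    -- (b)
    (∀ (m n : ℕ) (w : L) (x : V), 0 < m → 0 < n → 4 * n ≤ m →
      x ∈ sumset n {x : V | ∃ v : L, α ∈ μ v +ᵥ C ∧ x ∈ μ v +ᵥ C} →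
      x + μ (m • w) ∈ sumset n {x : V | ∃ v : L, α ∈ μ v +ᵥ C ∧ x ∈ μ v +ᵥ C} →
      w = 0) := by
  have hb : ∀ (m n : ℕ) (w : L) (x : V), 0 < m → 0 < n → 4 * n ≤ m →
      x ∈ sumset n {x : V | ∃ v : L, α ∈ μ v +ᵥ C ∧ x ∈ μ v +ᵥ C} →
      x + μ (m • w) ∈ sumset n {x : V | ∃ v : L, α ∈ μ v +ᵥ C ∧ x ∈ μ v +ᵥ C} →
      w = 0 := by
    rintro m n w x hm hn hmn ⟨f, hf, hx⟩ ⟨g, hg, hy⟩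
    have hstar : ∀ z ∈ {x : V | ∃ v : L, α ∈ μ v +ᵥ C ∧ x ∈ μ v +ᵥ C},
        ∃ a ∈ C, ∃ c ∈ C, z = α + (c - a) := by
      rintro z ⟨v, ⟨a, ha, hav⟩, ⟨c, hc, hcv⟩⟩
      simp only [vadd_eq_add] at hav hcv
      exact ⟨a, ha, c, hc, by rw [← hav, ← hcv]; abel⟩
    choose a ha c hc hfac using fun i => hstar _ (hf i)
    choose b hb d hd hgbd using fun i => hstar _ (hg i)
    have hp := smul_sum_mem_interior hconv h0 hn hmn a d ha hd
    have hq := smul_sum_mem_interior hconv h0 hn hmn b c hb hc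
    have hm' : (m : ℝ) ≠ 0 := by exact_mod_cast hm.ne'
    have hdiff : (m : ℝ) • μ w = ∑ i, (a i + d i) - ∑ i, (b i + c i) := by
      have h1 : μ (m • w) = ∑ i, g i - ∑ i, f i := by rw [← hy, hx]; abel
      rw [Nat.cast_smul_eq_nsmul, ← map_nsmul, h1, ← Finset.sum_sub_distrib,
        ← Finset.sum_sub_distrib]
      refine Finset.sum_congr rfl fun i _ => ?_
      rw [hfac, hgbd]
      abel
    have hw : μ w + (m : ℝ)⁻¹ • ∑ i, (b i + c i) = (m : ℝ)⁻¹ • ∑ i, (a i + d i) := by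
      rw [sub_eq_iff_eq_add.mp hdiff.symm, smul_add, inv_smul_smul₀ hm']
    by_contra hne
    refine Set.disjoint_left.mp (hdisj w 0 hne) ?_ (by simpa using hp)
    rw [interior_vadd, ← hw]
    exact Set.vadd_mem_vadd_set hq
  refine ⟨?_, hb⟩
  rintro m w hm ⟨_, ⟨x, hx, rfl⟩, hy⟩
  refine hb m 1 w x (by omega) one_pos (by omega) ⟨fun _ => x, fun _ => hx, by simp⟩
    ⟨fun _ => μ (m • w) + x, fun _ => hy, by simp [add_comm]⟩

end Stmt7
end

section
/- Let Δ ⊆ ℝ^d be the convex hull of a finite subset of ℤ^d, of dimension r, and let α ∈ ℤ^d be a vertex (extreme point) of Δ. Let C := Cone(Δ − α) be the convex cone generated by Δ − α. Call w ∈ C ∩ ℤ^d primitive if w ≠ 0 and w cannot be written as w = v + v′ with v, v′ ∈ C ∩ ℤ^d both nonzero. Then every primitive element of C ∩ ℤ^d belongs to the r-fold sumset r(Δ − α) := {(x₁ − α) + ⋯ + (x_r − α) : xᵢ ∈ Δ}. -/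
/-!
By the conic version of Carathéodory's theorem (`conic_caratheodory`), an element `w` of the cone
is a combination `∑ c e • e`, `c e ≥ 0`, of linearly independent lattice vectors `e = s - α` with
`s ∈ S`; there are at most `r` of them, as they lie in the direction of the affine span of the
polytope. If some `c e > 1`, then `w = e + (w - e)` splits `w` into two nonzero lattice points of
the cone (`w - e ≠ 0` by linear independence), so for primitive `w` all `c e ≤ 1`. Then each
`c e • e` is on the segment from `0` to `e`, hence in `Δ - α`, and `w` is a sum of at most `r`
elements of `Δ - α`, which is padded with zeros.
-/

/-!
Statement 10: For a lattice polytope `Δ ⊆ ℝ^d` of dimension `r` with lattice vertex `α`,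
every primitive element of `Cone(Δ − α) ∩ ℤ^d` lies in the `r`-fold sumset `r(Δ − α)`.
-/

namespace Stmt10

/-- `x` is a point of `ℤ^d ⊆ ℝ^d`. -/
def IsLatticePt {d : ℕ} (x : Fin d → ℝ) : Prop := ∀ i, ∃ z : ℤ, x i = (z : ℝ)

/-- The convex cone generated by `S`: all finite nonnegative real combinations. -/
def coneOf {d : ℕ} (S : Set (Fin d → ℝ)) : Set (Fin d → ℝ) :=
  {x | ∃ (n : ℕ) (c : Fin n → ℝ) (v : Fin n → (Fin d → ℝ)),
    (∀ i, 0 ≤ c i) ∧ (∀ i, v i ∈ S) ∧ x = ∑ i, c i • v i}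

/-- The `n`-fold sumset `nS = {s₁ + ⋯ + s_n : sᵢ ∈ S}`. -/
def sumset {d : ℕ} (n : ℕ) (S : Set (Fin d → ℝ)) : Set (Fin d → ℝ) :=
  {x | ∃ f : Fin n → (Fin d → ℝ), (∀ i, f i ∈ S) ∧ x = ∑ i, f i}

/-- Conic Carathéodory: the support of a nonnegative combination can be shrunk until it is
linearly independent. If there is a relation `∑ g e • e = 0`, with some `g e > 0`, then subtracting
the multiple `min {c e / g e | g e > 0}` of it keeps the coefficients nonnegative and kills
one of them. -/
lemma conic_caratheodory {E : Type*} [AddCommGroup E] [Module ℝ E] (t : Finset E)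
    (c : E → ℝ) (hc : ∀ e ∈ t, 0 ≤ c e) :
    ∃ t' ⊆ t, ∃ c' : E → ℝ, (∀ e ∈ t', 0 ≤ c' e) ∧
      LinearIndependent ℝ ((↑) : t' → E) ∧ ∑ e ∈ t', c' e • e = ∑ e ∈ t, c e • e := by
  classical
  induction hn : t.card generalizing t c with
  | zero =>
    obtain rfl := Finset.card_eq_zero.mp hn
    exact ⟨∅, subset_rfl, c, hc, linearIndependent_empty_type, rfl⟩
  | succ n ih =>
    by_cases hli : LinearIndependent ℝ ((↑) : t → E)
    · exact ⟨t, subset_rfl, c, hc, hli, rfl⟩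
    -- up to sign, the relation has a positive coefficient
    obtain ⟨g, hg, hpos⟩ : ∃ g : E → ℝ, ∑ e ∈ t, g e • e = 0 ∧ ∃ e ∈ t, 0 < g e := by
      have h := mt (linearIndepOn_finset_iff (v := (id : E → E)) (s := t) (R := ℝ)).mpr hli
      push Not at h
      obtain ⟨g, hg, e, he, hne⟩ := h
      rcases lt_or_gt_of_ne hne with h | h
      · refine ⟨fun e => -g e, ?_, e, he, by linarith⟩
        simpa using hg
      · exact ⟨g, by simpa using hg, e, he, h⟩
    obtain ⟨i, hi, hmin⟩ := (t.filter fun e => 0 < g e).exists_min_image (fun e => c e / g e)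
      (by obtain ⟨e, he, h⟩ := hpos; exact ⟨e, Finset.mem_filter.mpr ⟨he, h⟩⟩)
    obtain ⟨hit, hgi⟩ := Finset.mem_filter.mp hi
    set k : E → ℝ := fun e => c e - c i / g i * g e with hk
    have hki : k i = 0 := by simp [hk, hgi.ne']
    have hk0 : ∀ e ∈ t, 0 ≤ k e := by
      intro e he
      simp only [hk, sub_nonneg]
      rcases lt_or_ge 0 (g e) with h | h
      · exact (le_div_iff₀ h).mp (hmin e (Finset.mem_filter.mpr ⟨he, h⟩))
      · exact (mul_nonpos_of_nonneg_of_nonpos (div_nonneg (hc i hit) hgi.le) h).trans (hc e he)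
    obtain ⟨t', ht', c', h1, h2, h3⟩ := ih (t.erase i) k
      (fun e he => hk0 e (Finset.mem_of_mem_erase he)) (by rw [Finset.card_erase_of_mem hit]; omega)
    refine ⟨t', ht'.trans (Finset.erase_subset _ _), c', h1, h2, h3.trans ?_⟩
    rw [Finset.sum_erase t (by rw [hki, zero_smul])]
    simp only [hk, sub_smul, mul_smul, Finset.sum_sub_distrib, ← Finset.smul_sum, hg, smul_zero,
      sub_zero]

lemma sum_mem_coneOf {d : ℕ} {A : Set (Fin d → ℝ)} (t : Finset (Fin d → ℝ))
    (c : (Fin d → ℝ) → ℝ) (hc : ∀ e ∈ t, 0 ≤ c e) (ht : ∀ e ∈ t, e ∈ A) :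
    ∑ e ∈ t, c e • e ∈ coneOf A := by
  refine ⟨t.card, fun i => c (t.equivFin.symm i), fun i => t.equivFin.symm i,
    fun i => hc _ (t.equivFin.symm i).2, fun i => ht _ (t.equivFin.symm i).2, ?_⟩
  rw [Equiv.sum_comp t.equivFin.symm (fun e : t => c e • (e : Fin d → ℝ))]
  exact (Finset.sum_coe_sort t fun e => c e • e).symm

lemma sum_mem_sumset {d r : ℕ} {A : Set (Fin d → ℝ)} (h0 : 0 ∈ A) (t : Finset (Fin d → ℝ))
    (g : (Fin d → ℝ) → (Fin d → ℝ)) (hg : ∀ e ∈ t, g e ∈ A) (hr : t.card ≤ r) :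
    ∑ e ∈ t, g e ∈ sumset r A := by
  obtain ⟨k, rfl⟩ := Nat.exists_eq_add_of_le hr
  refine ⟨Fin.append (fun i => g (t.equivFin.symm i)) (fun _ => 0), ?_, ?_⟩
  · intro i
    refine Fin.addCases (fun i => ?_) (fun i => ?_) i
    · rw [Fin.append_left]
      exact hg _ (t.equivFin.symm i).2
    · rw [Fin.append_right]
      exact h0
  · simp only [Fin.sum_univ_add, Fin.append_left, Fin.append_right, Finset.sum_const_zero, add_zero]
    rw [Equiv.sum_comp t.equivFin.symm (fun e : t => g e)]
    exact (Finset.sum_coe_sort t g).symm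

/-- The translated points of `S` suffice to generate the cone over `conv S - α`. -/
lemma coneOf_subset_hull {d : ℕ} (S : Set (Fin d → ℝ)) (α : Fin d → ℝ) :
    coneOf ((fun x => x - α) '' convexHull ℝ S) ⊆
      (PointedCone.hull ℝ ((fun x => x - α) '' S) : Set (Fin d → ℝ)) := by
  rintro _ ⟨n, c, v, hc, hv, rfl⟩
  have key : convexHull ℝ S ⊆
      {x | x - α ∈ PointedCone.hull ℝ ((fun x => x - α) '' S)} := by
    refine convexHull_min (fun x hx => PointedCone.subset_hull ⟨x, hx, rfl⟩) ?_
    intro x hx y hy a b ha hb hab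
    have h : a • x + b • y - α = a • (x - α) + b • (y - α) := by
      rw [smul_sub, smul_sub, sub_add_sub_comm, ← add_smul, hab, one_smul]
    simp only [Set.mem_ofPred_eq] at hx hy ⊢
    rw [h]
    exact add_mem (PointedCone.smul_mem _ ha hx) (PointedCone.smul_mem _ hb hy)
  refine sum_mem fun i _ => PointedCone.smul_mem _ (hc i) ?_
  obtain ⟨x, hx, h⟩ := hv i
  rw [← h]
  exact key hx

theorem stmt10 (d r : ℕ) (S : Set (Fin d → ℝ)) (hfin : S.Finite)
    (hlat : ∀ x ∈ S, IsLatticePt x)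
    -- `r` is the dimension of `Δ = conv(S)`
    (hr : Module.finrank ℝ (affineSpan ℝ (convexHull ℝ S)).direction = r)
    -- `α ∈ ℤ^d` is a vertex (extreme point) of `Δ`
    (α : Fin d → ℝ) (hαlat : IsLatticePt α)
    (hα : α ∈ Set.extremePoints ℝ (convexHull ℝ S)) :
    ∀ w : Fin d → ℝ,
      w ∈ coneOf ((fun x => x - α) '' convexHull ℝ S) → IsLatticePt w → w ≠ 0 →
      -- `w` is primitive in `Cone(Δ − α) ∩ ℤ^d`
      (¬ ∃ v v' : Fin d → ℝ,
        v ∈ coneOf ((fun x => x - α) '' convexHull ℝ S) ∧ IsLatticePt v ∧ v ≠ 0 ∧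
        v' ∈ coneOf ((fun x => x - α) '' convexHull ℝ S) ∧ IsLatticePt v' ∧ v' ≠ 0 ∧
        w = v + v') →
      w ∈ sumset r ((fun x => x - α) '' convexHull ℝ S) := by
  classical
  intro w hw hwlat hw0 hprim
  obtain ⟨c₀, hc₀T, hc₀, hsum₀⟩ := PointedCone.mem_hull_set.mp (coneOf_subset_hull S α hw)
  obtain ⟨t, htsub, c, hc, hli, hsum⟩ :=
    conic_caratheodory c₀.support c₀ (fun e _ => hc₀ e)
  have hwt : w = ∑ e ∈ t, c e • e := by rw [hsum, ← hsum₀]; rfl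
  have htT : ∀ e ∈ t, e ∈ (fun x => x - α) '' S := fun e he => hc₀T (htsub he)
  have htA : ∀ e ∈ t, e ∈ (fun x => x - α) '' convexHull ℝ S := fun e he =>
    Set.image_mono (subset_convexHull ℝ S) (htT e he)
  have htlat : ∀ e ∈ t, IsLatticePt e := by
    intro e he i
    obtain ⟨x, hx, rfl⟩ := htT e he
    obtain ⟨a, ha⟩ := hlat x hx i
    obtain ⟨b, hb⟩ := hαlat i
    exact ⟨a - b, by simp [ha, hb]⟩
  have h0A : (0 : Fin d → ℝ) ∈ (fun x => x - α) '' convexHull ℝ S := ⟨α, hα.1, sub_self α⟩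
  have hcard : t.card ≤ r := by
    rw [← hr, ← finrank_span_finset_eq_card (R := ℝ) hli]
    refine Submodule.finrank_mono (Submodule.span_le.mpr fun e he => ?_)
    obtain ⟨x, hx, rfl⟩ := htA e he
    exact AffineSubspace.vsub_mem_direction (subset_affineSpan ℝ _ hx)
      (subset_affineSpan ℝ _ hα.1)
  -- A coefficient above `1` would allow a generator to be split off from `w`.
  have hle : ∀ e ∈ t, c e ≤ 1 := by
    intro u hu
    by_contra! hlt
    have hsub : w - u = ∑ e ∈ t, (c e - if e = u then 1 else 0) • e := by
      simp [sub_smul, Finset.sum_sub_distrib, hwt, hu]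
    refine hprim ⟨u, w - u, ?_, htlat u hu, hli.ne_zero ⟨u, hu⟩, ?_, ?_, ?_, by abel⟩
    · exact ⟨1, fun _ => 1, fun _ => u, by simp, fun _ => htA u hu, by simp⟩
    · rw [hsub]
      refine sum_mem_coneOf t (fun e => c e - if e = u then 1 else 0) (fun e he => ?_) htA
      by_cases h : e = u
      · subst h
        simpa using hlt.le
      · simpa [h] using hc e he
    · intro i
      obtain ⟨a, ha⟩ := hwlat i
      obtain ⟨b, hb⟩ := htlat u hu i
      exact ⟨a - b, by simp [ha, hb]⟩
    · intro h
      -- by independence the coefficient `c u - 1` of `u` in `w - u = 0` vanishes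
      have := (linearIndepOn_finset_iff (v := (id : (Fin d → ℝ) → _)) (s := t) (R := ℝ)).mp hli
        (fun e => c e - if e = u then 1 else 0) (by simpa using! hsub.symm.trans h) u hu
      simp only [if_true] at this
      linarith
  rw [hwt]
  refine sum_mem_sumset h0A t (fun e => c e • e) (fun e he => ?_) hcard
  -- `c e • e` lies on the segment from `0` to `e`
  obtain ⟨x, hx, rfl⟩ := htA e he
  refine ⟨(1 - c (x - α)) • α + c (x - α) • x, ?_, ?_⟩
  · exact convex_convexHull ℝ S hα.1 hx (sub_nonneg.mpr (hle _ he)) (hc _ he) (by ring)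
  · simp only [sub_smul, one_smul, smul_sub]
    abel

end Stmt10
end

section
/- Let Δ ⊆ ℝ^d be the convex hull of a finite subset of ℤ^d, of dimension r ≥ 1, and let α ∈ ℤ^d be a vertex (extreme point) of Δ. Let C := Cone(Δ − α) be the convex cone generated by Δ − α. Then for every integer m ≥ r, the additive submonoid of ℤ^d generated by the lattice points of the m-fold sumset m(Δ − α), i.e. by (m(Δ − α)) ∩ ℤ^d, equals C ∩ ℤ^d. -/
/-!
The inclusion `⊆` is formal: a sum of elements of `Δ - α` lies in the cone, and both the cone and
the lattice are closed under addition.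

For `⊇`, let `x` be a lattice point of the cone. Since `Δ = conv S`, the cone is generated by the
finitely many lattice vectors `s - α` with `s ∈ S`, so Carathéodory's theorem for cones
(`exists_linearIndepOn_subset`) gives `x = ∑ s ∈ t, c s • (s - α)` with `c ≥ 0` and the `s - α`
linearly independent; in particular `#t ≤ r ≤ m`. Split each coefficient as
`c s = ⌊c s⌋₊ + fract (c s)`. The integral part of `x` is a sum of vectors `s - α`, each of which is
a lattice point of `m(Δ - α)` because `0 ∈ Δ - α` and `1 ≤ m`. The remainder
`∑ s ∈ t, fract (c s) • (s - α)` is a lattice point, being a difference of two, and it is a sum of at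
most `m` elements of the convex set `Δ - α ∋ 0`, hence lies in `m(Δ - α)`.
-/

namespace Stmt11

/-- `x` is a point of `ℤ^d ⊆ ℝ^d`. -/
def IsLatticePt {d : ℕ} (x : Fin d → ℝ) : Prop := ∀ i, ∃ z : ℤ, x i = (z : ℝ)

/-- The convex cone generated by `S`: all finite nonnegative real combinations. -/
def coneOf {d : ℕ} (S : Set (Fin d → ℝ)) : Set (Fin d → ℝ) :=
  {x | ∃ (n : ℕ) (c : Fin n → ℝ) (v : Fin n → (Fin d → ℝ)),
    (∀ i, 0 ≤ c i) ∧ (∀ i, v i ∈ S) ∧ x = ∑ i, c i • v i}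

/-- The `n`-fold sumset `nS = {s₁ + ⋯ + s_n : sᵢ ∈ S}`. -/
def sumset {d : ℕ} (n : ℕ) (S : Set (Fin d → ℝ)) : Set (Fin d → ℝ) :=
  {x | ∃ f : Fin n → (Fin d → ℝ), (∀ i, f i ∈ S) ∧ x = ∑ i, f i}

/-- **Carathéodory's theorem for cones**: a nonnegative combination of a finite family can be
rewritten as a nonnegative combination of a linearly independent subfamily. -/
lemma exists_linearIndepOn_subset {ι E : Type*} [AddCommGroup E] [Module ℝ E] (f : ι → E)
    (T : Finset ι) (w : ι → ℝ) (hw : ∀ i ∈ T, 0 ≤ w i) :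
    ∃ t ⊆ T, ∃ c : ι → ℝ, (∀ i ∈ t, 0 ≤ c i) ∧ LinearIndepOn ℝ f (t : Set ι) ∧
      ∑ i ∈ T, w i • f i = ∑ i ∈ t, c i • f i := by
  classical
  induction T using Finset.strongInduction generalizing w with
  | H T ih =>
    by_cases hli : LinearIndepOn ℝ f (T : Set ι)
    · exact ⟨T, subset_rfl, w, hw, hli, rfl⟩
    obtain ⟨g, hg, hpos⟩ : ∃ g : ι → ℝ, ∑ i ∈ T, g i • f i = 0 ∧ ∃ i ∈ T, 0 < g i := by
      obtain ⟨g, hg, i, hi, hne⟩ := not_linearIndepOn_finset_iff.1 hli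
      rcases lt_or_gt_of_ne hne with h | h
      · exact ⟨fun i => -g i, by simp [hg], i, hi, by simpa using h⟩
      · exact ⟨g, hg, i, hi, h⟩
    -- Subtract the largest multiple of the relation `g` that keeps all coefficients nonnegative;
    -- the coefficient at `k` then vanishes.
    obtain ⟨k, hk, hmin⟩ := Finset.exists_min_image (T.filter fun i => 0 < g i)
      (fun i => w i / g i) (by simpa [Finset.Nonempty] using hpos)
    rw [Finset.mem_filter] at hk
    obtain ⟨hkT, hgk⟩ := hk
    have hq : 0 ≤ w k / g k := div_nonneg (hw k hkT) hgk.le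
    obtain ⟨t, ht, c, hc, hlin, hsum⟩ := ih (T.erase k) (Finset.erase_ssubset hkT)
      (fun i => w i - w k / g k * g i) (by
        intro i hi
        have hiT := Finset.mem_of_mem_erase hi
        rcases lt_or_ge 0 (g i) with h | h
        · have := hmin i (Finset.mem_filter.2 ⟨hiT, h⟩)
          rw [le_div_iff₀ h] at this
          linarith
        · have := mul_nonpos_of_nonneg_of_nonpos hq h
          linarith [hw i hiT])
    refine ⟨t, ht.trans (Finset.erase_subset _ _), c, hc, hlin, ?_⟩
    rw [← hsum, Finset.sum_erase]
    · simp only [sub_smul, mul_smul, Finset.sum_sub_distrib, ← Finset.smul_sum, hg, smul_zero,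
        sub_zero]
    · rw [div_mul_cancel₀ _ hgk.ne', sub_self, zero_smul]

lemma IsLatticePt.zero {d : ℕ} : IsLatticePt (0 : Fin d → ℝ) := fun _ => ⟨0, by simp⟩

lemma IsLatticePt.add {d : ℕ} {x y : Fin d → ℝ} (hx : IsLatticePt x) (hy : IsLatticePt y) :
    IsLatticePt (x + y) := fun i => by
  obtain ⟨a, ha⟩ := hx i
  obtain ⟨b, hb⟩ := hy i
  exact ⟨a + b, by simp [ha, hb]⟩

lemma IsLatticePt.sub {d : ℕ} {x y : Fin d → ℝ} (hx : IsLatticePt x) (hy : IsLatticePt y) :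
    IsLatticePt (x - y) := fun i => by
  obtain ⟨a, ha⟩ := hx i
  obtain ⟨b, hb⟩ := hy i
  exact ⟨a - b, by simp [ha, hb]⟩

lemma IsLatticePt.nsmul {d : ℕ} {x : Fin d → ℝ} (hx : IsLatticePt x) (n : ℕ) :
    IsLatticePt (n • x) := fun i => by
  obtain ⟨a, ha⟩ := hx i
  exact ⟨n * a, by simp [ha]⟩

lemma IsLatticePt.sum {d : ℕ} {ι : Type*} {t : Finset ι} {g : ι → Fin d → ℝ}
    (h : ∀ i ∈ t, IsLatticePt (g i)) : IsLatticePt (∑ i ∈ t, g i) :=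
  Finset.sum_induction g IsLatticePt (fun _ _ => IsLatticePt.add) IsLatticePt.zero h

lemma coneOf_add {d : ℕ} {A : Set (Fin d → ℝ)} {x y : Fin d → ℝ} (hx : x ∈ coneOf A)
    (hy : y ∈ coneOf A) : x + y ∈ coneOf A := by
  obtain ⟨n, c, v, hc, hv, rfl⟩ := hx
  obtain ⟨k, c', v', hc', hv', rfl⟩ := hy
  refine ⟨n + k, Fin.append c c', Fin.append v v', fun i => ?_, fun i => ?_, ?_⟩
  · refine Fin.addCases (fun i => ?_) (fun i => ?_) i <;> simp [hc, hc']
  · refine Fin.addCases (fun i => ?_) (fun i => ?_) i <;> simp [hv, hv']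
  · simp [Fin.sum_univ_add]

/-- If `0 ∈ A`, a sum of at most `m` elements of `A` can be padded with zeros. -/
lemma sum_mem_sumset {d : ℕ} {ι : Type*} {A : Set (Fin d → ℝ)} (h0 : 0 ∈ A) (t : Finset ι)
    (g : ι → Fin d → ℝ) (hg : ∀ i ∈ t, g i ∈ A) (m : ℕ) (hm : t.card ≤ m) :
    ∑ i ∈ t, g i ∈ sumset m A := by
  classical
  induction t using Finset.induction_on generalizing m with
  | empty => exact ⟨fun _ => 0, fun _ => h0, by simp⟩
  | insert a s ha ih =>
    rw [Finset.card_insert_of_notMem ha] at hm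
    obtain ⟨k, rfl⟩ : ∃ k, m = k + 1 := ⟨m - 1, by omega⟩
    obtain ⟨f, hf, hsum⟩ := ih (fun i hi => hg i (Finset.mem_insert_of_mem hi)) k (by omega)
    refine ⟨Fin.cons (g a) f, fun i => ?_, ?_⟩
    · refine Fin.cases ?_ (fun i => ?_) i
      · simpa using hg a (Finset.mem_insert_self _ _)
      · simpa using hf i
    · rw [Finset.sum_insert ha, hsum, Fin.sum_univ_succ]
      simp

/-- The cone over `conv T - α` is generated by the vectors `y - α` with `y ∈ T`. -/
lemma exists_weights_of_mem_coneOf {d : ℕ} {T : Finset (Fin d → ℝ)} {α x : Fin d → ℝ}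
    (hx : x ∈ coneOf ((fun x => x - α) '' convexHull ℝ (T : Set (Fin d → ℝ)))) :
    ∃ w : (Fin d → ℝ) → ℝ, (∀ y ∈ T, 0 ≤ w y) ∧ x = ∑ y ∈ T, w y • (y - α) := by
  obtain ⟨n, c, v, hc, hv, rfl⟩ := hx
  have key : ∀ i, ∃ w : (Fin d → ℝ) → ℝ, (∀ y ∈ T, 0 ≤ w y) ∧ v i = ∑ y ∈ T, w y • (y - α) := by
    intro i
    obtain ⟨p, hp, hpv⟩ := hv i
    obtain ⟨w, hw, hw1, hwp⟩ := Finset.mem_convexHull'.1 hp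
    refine ⟨w, hw, ?_⟩
    simp only [smul_sub, Finset.sum_sub_distrib, ← Finset.sum_smul, hw1, hwp, one_smul]
    exact hpv.symm
  choose w hw hv' using key
  refine ⟨fun y => ∑ i, c i * w i y,
    fun y hy => Finset.sum_nonneg fun i _ => mul_nonneg (hc i) (hw i y hy), ?_⟩
  simp only [Finset.sum_smul, mul_smul]
  rw [Finset.sum_comm]
  exact Finset.sum_congr rfl fun i _ => by rw [← Finset.smul_sum, ← hv' i]

theorem stmt11 (d r : ℕ) (hr1 : 1 ≤ r) (S : Set (Fin d → ℝ)) (hfin : S.Finite)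
    (hlat : ∀ x ∈ S, IsLatticePt x)
    -- `r` is the dimension of `Δ = conv(S)`
    (hr : Module.finrank ℝ (affineSpan ℝ (convexHull ℝ S)).direction = r)
    -- `α ∈ ℤ^d` is a vertex (extreme point) of `Δ`
    (α : Fin d → ℝ) (hαlat : IsLatticePt α)
    (hα : α ∈ Set.extremePoints ℝ (convexHull ℝ S))
    (m : ℕ) (hm : r ≤ m) :
    (AddSubmonoid.closure
        (sumset m ((fun x => x - α) '' convexHull ℝ S) ∩ {x | IsLatticePt x}) :
      Set (Fin d → ℝ)) =
      coneOf ((fun x => x - α) '' convexHull ℝ S) ∩ {x | IsLatticePt x} := by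
  have hαmem : α ∈ convexHull ℝ S := hα.1
  apply Set.Subset.antisymm
  · intro x hx
    induction hx using AddSubmonoid.closure_induction with
    | mem x hx =>
      obtain ⟨⟨f, hf, rfl⟩, hl⟩ := hx
      exact ⟨⟨m, fun _ => 1, f, fun _ => zero_le_one, hf, by simp⟩, hl⟩
    | zero => exact ⟨⟨0, Fin.elim0, Fin.elim0, fun i => i.elim0, fun i => i.elim0, by simp⟩,
        IsLatticePt.zero⟩
    | add x y _ _ hx hy => exact ⟨coneOf_add hx.1 hy.1, IsLatticePt.add hx.2 hy.2⟩
  · rintro x ⟨hx, hxl⟩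
    lift S to Finset (Fin d → ℝ) using hfin
    obtain ⟨w, hw, hxw⟩ := exists_weights_of_mem_coneOf hx
    obtain ⟨t, ht, c, hc, hlin, hsum⟩ := exists_linearIndepOn_subset (fun y => y - α) S w hw
    rw [hsum] at hxw
    set A : Set (Fin d → ℝ) := (fun x => x - α) '' convexHull ℝ (S : Set (Fin d → ℝ)) with hA
    have h0 : (0 : Fin d → ℝ) ∈ A := ⟨α, hαmem, sub_self α⟩
    have hAconv : Convex ℝ A := by
      simpa only [hA, sub_eq_neg_add] using
        (convex_convexHull ℝ (S : Set (Fin d → ℝ))).translate (-α)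
    have hvA : ∀ y ∈ t, y - α ∈ A := fun y hy => ⟨y, subset_convexHull ℝ _ (ht hy), rfl⟩
    have hvl : ∀ y ∈ t, IsLatticePt (y - α) := fun y hy => (hlat y (ht hy)).sub hαlat
    have hcard : t.card ≤ m := by
      refine le_trans ?_ hm
      have h1 := finrank_span_eq_card hlin
      simp only [SetLike.coe_sort_coe, Fintype.card_coe] at h1
      rw [← h1, ← hr]
      apply Submodule.finrank_mono
      rw [Submodule.span_le]
      rintro _ ⟨y, rfl⟩
      exact AffineSubspace.vsub_mem_direction
        (subset_affineSpan ℝ _ (subset_convexHull ℝ _ (ht y.2))) (subset_affineSpan ℝ _ hαmem)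
    have hsplit : x = ∑ y ∈ t, ⌊c y⌋₊ • (y - α) + ∑ y ∈ t, Int.fract (c y) • (y - α) := by
      rw [hxw, ← Finset.sum_add_distrib]
      refine Finset.sum_congr rfl fun y hy => ?_
      rw [← Nat.cast_smul_eq_nsmul ℝ, ← add_smul, natCast_floor_eq_intCast_floor (hc y hy),
        Int.floor_add_fract]
    have hintl : IsLatticePt (∑ y ∈ t, ⌊c y⌋₊ • (y - α)) :=
      IsLatticePt.sum fun y hy => (hvl y hy).nsmul _
    rw [hsplit]
    refine add_mem (sum_mem fun y hy => nsmul_mem ?_ _) (AddSubmonoid.subset_closure ⟨?_, ?_⟩)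
    · refine AddSubmonoid.subset_closure ⟨?_, hvl y hy⟩
      simpa using sum_mem_sumset h0 {()} (fun _ => y - α) (fun _ _ => hvA y hy) m
        (by simpa using hr1.trans hm)
    · exact sum_mem_sumset h0 t _ (fun y hy => hAconv.smul_mem_of_zero_mem h0 (hvA y hy)
        ⟨Int.fract_nonneg _, (Int.fract_lt_one _).le⟩) m hcard
    · have := hxl.sub hintl
      rwa [hsplit, add_sub_cancel_left] at this

end Stmt11
end
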